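/- arXiv:2311.01317 — 5 statements merged into one kernel-verified Lean document; each statement's English description precedes it below -/
import Mathlib

section
/- Let τ ≥ 1 and n = 2^τ, and let W^(l) ∈ ℝ^{n×n} be the one-peer exponential weight matrices. If l₀, …, l_{τ−1} ∈ ℕ are indices such that {l₀ mod τ, …, l_{τ−1} mod τ} = {0, 1, …, τ−1}, then W^(l_{τ−1}) W^(l_{τ−2}) ⋯ W^(l₁) W^(l₀) = (1/n)·11ᵀ, where 1 ∈ ℝⁿ is the all-ones vector. In particular, the matrices W^(0), …, W^(τ−1) have the finite-time consensus property. -/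
open Matrix

/-- `Jmat n = (1/n) · 11ᵀ`, the exact-averaging matrix. -/
noncomputable def Jmat (n : ℕ) : Matrix (Fin n) (Fin n) ℝ :=
  Matrix.of fun _ _ => (n : ℝ)⁻¹

/-- Ordered product `mprod W k = W^(k-1) ⋯ W^(1) W^(0)` (empty product is the identity). -/
noncomputable def mprod {n : ℕ} (W : ℕ → Matrix (Fin n) (Fin n) ℝ) :
    ℕ → Matrix (Fin n) (Fin n) ℝ
  | 0 => 1
  | k + 1 => W k * mprod W k

/-- The one-peer exponential weight matrix `W^(l)` on `n` nodes (indices `0, …, n-1`):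
`W^(l)_{ij} = 1/2` if `(j - i) mod n = 2^(l mod τ)`, `1/2` if `i = j`, and `0` otherwise. -/
noncomputable def expW (n τ l : ℕ) : Matrix (Fin n) (Fin n) ℝ :=
  Matrix.of fun i j =>
    if ((j : ℤ) - (i : ℤ)) % (n : ℤ) = 2 ^ (l % τ) then 1 / 2
    else if i = j then 1 / 2
    else 0

noncomputable def shP (n : ℕ) : Matrix (Fin n) (Fin n) ℝ :=
  Matrix.of fun i j => if (j : ℕ) = ((i : ℕ) + 1) % n then 1 else 0

lemma shP_pow (n m : ℕ) (i j : Fin n) :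
    (shP n ^ m) i j = if (j : ℕ) = ((i : ℕ) + m) % n then 1 else 0 := by
  induction m generalizing i j with
  | zero =>
    simp [Matrix.one_apply, Nat.mod_eq_of_lt i.2, Fin.ext_iff, eq_comm]
  | succ m ih =>
    have hpos : 0 < n := lt_of_le_of_lt (Nat.zero_le _) i.2
    rw [pow_succ, Matrix.mul_apply,
      Finset.sum_eq_single (⟨((i : ℕ) + m) % n, Nat.mod_lt _ hpos⟩ : Fin n)]
    · rw [ih]
      simp [shP, add_assoc]
    · intro k _ hk
      rw [ih, if_neg, zero_mul]
      intro h
      exact hk (Fin.ext h)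
    · simp

lemma cond_iff (n m : ℕ) (hm : m < n) (i j : Fin n) :
    ((j : ℕ) = ((i : ℕ) + m) % n) ↔ ((j : ℤ) - (i : ℤ)) % (n : ℤ) = (m : ℤ) := by
  have hj := j.2
  have h1 : ((j : ℕ) = ((i : ℕ) + m) % n) ↔ ((j : ℤ) % n = ((i : ℤ) + m) % n) := by
    rw [Int.emod_eq_of_lt (by omega) (by exact_mod_cast hj)]
    norm_cast
  have h2 : (m : ℤ) = (m : ℤ) % n := by
    rw [Int.emod_eq_of_lt (by omega) (by exact_mod_cast hm)]
  rw [h1, h2, Int.emod_eq_emod_iff_emod_sub_eq_zero,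
    Int.emod_eq_emod_iff_emod_sub_eq_zero, ← h2, sub_sub]

lemma expW_eq (n τ l : ℕ) (hτ : 1 ≤ τ) (hn : n = 2 ^ τ) :
    expW n τ l = (1 / 2 : ℝ) • (1 + shP n ^ (2 ^ (l % τ))) := by
  have hlt : 2 ^ (l % τ) < n := by
    rw [hn]; exact Nat.pow_lt_pow_right (by norm_num) (Nat.mod_lt _ hτ)
  ext i j
  have h := cond_iff n _ hlt i j
  push_cast at h
  simp only [expW, Matrix.of_apply, Matrix.smul_apply, Matrix.add_apply, shP_pow, Matrix.one_apply,
    ← h, smul_eq_mul]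
  by_cases hij : i = j
  · subst hij
    have : ¬ ((i : ℕ) = ((i : ℕ) + 2 ^ (l % τ)) % n) := by
      rw [h]; simp
      positivity
    simp [this]
  · by_cases h' : (j : ℕ) = ((i : ℕ) + 2 ^ (l % τ)) % n <;> simp [hij, h']

lemma mprod_aeval {n : ℕ} (A : Matrix (Fin n) (Fin n) ℝ) (W : ℕ → Matrix (Fin n) (Fin n) ℝ)
    (p : ℕ → Polynomial ℝ) (h : ∀ i, W i = Polynomial.aeval A (p i)) (k : ℕ) :
    mprod W k = Polynomial.aeval A (∏ i ∈ Finset.range k, p i) := by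
  induction k with
  | zero => simp [mprod]
  | succ k ih => rw [mprod, ih, h, ← map_mul, Finset.prod_range_succ, mul_comm]

lemma prod_geom (k : ℕ) :
    ∏ i ∈ Finset.range k, (1 + (Polynomial.X : Polynomial ℝ) ^ (2 ^ i)) =
      ∑ m ∈ Finset.range (2 ^ k), Polynomial.X ^ m := by
  induction k with
  | zero => simp
  | succ k ih =>
    rw [Finset.prod_range_succ, ih, pow_succ, mul_two, Finset.sum_range_add]
    simp only [pow_add, ← Finset.mul_sum]
    ring

lemma main_aux (τ : ℕ) (hτ : 1 ≤ τ) (n : ℕ) (hn : n = 2 ^ τ)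
    (l : ℕ → ℕ)
    (hl : Finset.image (fun i => l i % τ) (Finset.range τ) = Finset.range τ) :
    mprod (fun i => expW n τ (l i)) τ = Jmat n := by
  have hinj : Set.InjOn (fun i => l i % τ) (Finset.range τ : Set ℕ) :=
    Finset.card_image_iff.mp (by rw [hl])
  rw [mprod_aeval (shP n) _
    (fun i => (1 / 2 : ℝ) • (1 + (Polynomial.X : Polynomial ℝ) ^ (2 ^ (l i % τ))))
    (fun i => by simp [expW_eq n τ (l i) hτ hn])]
  have := Finset.prod_image (s := Finset.range τ) (g := fun i => l i % τ)
    (f := fun k => (1 / 2 : ℝ) • (1 + (Polynomial.X : Polynomial ℝ) ^ (2 ^ k))) hinj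
  rw [← this, hl, Finset.prod_smul, prod_geom, ← hn]
  ext i j
  have hpos : (0 : ℤ) < n := by have := i.2; omega
  have hs : ∑ m ∈ Finset.range n, (shP n ^ m) i j = 1 := by
    have h0 := Int.emod_nonneg ((j : ℤ) - i) hpos.ne'
    have h1 := Int.emod_lt_of_pos ((j : ℤ) - i) hpos
    rw [Finset.sum_eq_single ((((j : ℤ) - i) % n).toNat)]
    · rw [shP_pow, if_pos]
      rw [cond_iff _ _ (by omega)]
      omega
    · intro m hm hne
      rw [shP_pow, if_neg]
      rw [cond_iff _ _ (Finset.mem_range.mp hm)]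
      omega
    · intro h
      exact absurd (Finset.mem_range.mpr (by omega)) h
  simp [Matrix.sum_apply, Jmat, hn]
  rw [← hn, hs]

theorem stmt2 (τ : ℕ) (hτ : 1 ≤ τ) (n : ℕ) (hn : n = 2 ^ τ)
    (l : ℕ → ℕ)
    (hl : Finset.image (fun i => l i % τ) (Finset.range τ) = Finset.range τ) :
    mprod (fun i => expW n τ (l i)) τ = Jmat n ∧
    mprod (expW n τ) τ = Jmat n := by
  refine ⟨main_aux τ hτ n hn l hl, main_aux τ hτ n hn id ?_⟩
  ext x
  simp only [Finset.mem_image, Finset.mem_range, id]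
  constructor
  · rintro ⟨a, ha, rfl⟩
    exact Nat.mod_lt _ hτ
  · intro hx
    exact ⟨x, hx, Nat.mod_eq_of_lt hx⟩
end

section
/- Let τ ≥ 1, let p₀, …, p_{τ−1} ≥ 2 be prime numbers with n = p_{τ−1}⋯p₁p₀, and let W^(l) ∈ ℝ^{n×n} be the p-peer hyper-cuboid weight matrices. Then each W^(l) is symmetric and doubly stochastic, and for any index sequence l₀, …, l_{τ−1} ∈ ℕ with {l₀ mod τ, …, l_{τ−1} mod τ} = {0, …, τ−1}, one has W^(l_{τ−1}) ⋯ W^(l₁) W^(l₀) = (1/n)·11ᵀ; i.e., the matrices have the finite-time consensus property. -/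
open Matrix

/-- A real square matrix is doubly stochastic if its entries are nonnegative and
every row sum and every column sum equals `1`. -/
def DoublyStochastic {n : ℕ} (W : Matrix (Fin n) (Fin n) ℝ) : Prop :=
  (∀ i j, 0 ≤ W i j) ∧ (∀ i, ∑ j, W i j = 1) ∧ (∀ j, ∑ i, W i j = 1)

/-- The `r`-th mixed-radix digit (base `(…, p 2, p 1, p 0)`) of the natural number `i`. -/
def digit (p : ℕ → ℕ) (r i : ℕ) : ℕ := (i / ∏ s ∈ Finset.range r, p s) % p r

open scoped Classical in
/-- The `p`-peer hyper-cuboid weight matrix `W^(l)` on `n = p_{τ-1} ⋯ p_1 p_0` nodes: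
`W^(l)_{ij} = 1/p_{l mod τ}` if the mixed-radix digits of `i` and `j` agree in every
position `r ≠ l mod τ`, and `0` otherwise. -/
noncomputable def cuboidW (p : ℕ → ℕ) (τ n l : ℕ) : Matrix (Fin n) (Fin n) ℝ :=
  Matrix.of fun i j =>
    if ∀ r < τ, r ≠ l % τ → digit p r (i : ℕ) = digit p r (j : ℕ) then
      (p (l % τ) : ℝ)⁻¹
    else 0

theorem digit_bij (τ : ℕ) (p : ℕ → ℕ) (n : ℕ) (hn : n = ∏ r ∈ Finset.range τ, p r) :
    ∃ e : Fin n ≃ ((r : Fin τ) → Fin (p r)), ∀ k r, (e k r : ℕ) = digit p r k := by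
  have h : n = ∏ r : Fin τ, p r := by rw [hn, Finset.prod_range]
  subst h
  refine ⟨(finPiFinEquiv (n := fun r : Fin τ => p r)).symm, fun k r => ?_⟩
  have : ∏ s ∈ Finset.range r, p s = ∏ s : Fin r, p s := by rw [Finset.prod_range]
  rw [digit, this]
  rfl

theorem exists_digit (τ : ℕ) (p : ℕ → ℕ) (n : ℕ) (hn : n = ∏ r ∈ Finset.range τ, p r)
    (f : ℕ → ℕ) (hf : ∀ r < τ, f r < p r) : ∃ k : Fin n, ∀ r < τ, digit p r k = f r := by
  obtain ⟨e, he⟩ := digit_bij τ p n hn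
  refine ⟨e.symm fun r => ⟨f r, hf r r.2⟩, fun r hr => ?_⟩
  rw [← he _ ⟨r, hr⟩]
  simp

theorem digit_ext (τ : ℕ) (p : ℕ → ℕ) (n : ℕ) (hn : n = ∏ r ∈ Finset.range τ, p r)
    (i j : Fin n) (h : ∀ r < τ, digit p r i = digit p r j) : i = j := by
  obtain ⟨e, he⟩ := digit_bij τ p n hn
  apply e.injective
  ext r
  rw [he, he]
  exact h r r.2

open scoped Classical in
theorem row_sum (τ : ℕ) (hτ : 1 ≤ τ) (p : ℕ → ℕ) (hp : ∀ r < τ, Nat.Prime (p r))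
    (n : ℕ) (hn : n = ∏ r ∈ Finset.range τ, p r) (l : ℕ) (i : Fin n) :
    ∑ j, cuboidW p τ n l i j = 1 := by
  have hl : l % τ < τ := Nat.mod_lt _ hτ
  have hpl := (hp _ hl).pos
  simp only [cuboidW, Matrix.of_apply]
  rw [← Finset.sum_filter, Finset.sum_const, nsmul_eq_mul]
  have hc : (Finset.univ.filter fun j : Fin n =>
      ∀ r < τ, r ≠ l % τ → digit p r (i : ℕ) = digit p r (j : ℕ)).card
      = (Finset.range (p (l % τ))).card := by
    apply Finset.card_bij (fun (j : Fin n) _ => digit p (l % τ) (j : ℕ))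
    · intro a _
      exact Finset.mem_range.2 (Nat.mod_lt _ hpl)
    · intro a ha b hb hab
      simp only [Finset.mem_filter, Finset.mem_univ, true_and] at ha hb
      apply digit_ext τ p n hn
      intro r hr
      by_cases h : r = l % τ
      · rw [h]; exact hab
      · rw [← ha r hr h, ← hb r hr h]
    · intro b hb
      obtain ⟨k, hk⟩ := exists_digit τ p n hn
        (fun r => if r = l % τ then b else digit p r i) (by
          intro r hr
          split_ifs with h
          · rw [h]; exact Finset.mem_range.1 hb
          · exact Nat.mod_lt _ (hp r hr).pos)
      refine ⟨k, ?_, ?_⟩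
      · simp only [Finset.mem_filter, Finset.mem_univ, true_and]
        intro r hr h
        rw [hk r hr, if_neg h]
      · rw [hk _ hl, if_pos rfl]
  rw [hc, Finset.card_range]
  exact mul_inv_cancel₀ (by exact_mod_cast hpl.ne')

theorem cuboid_symm (p : ℕ → ℕ) (τ n l : ℕ) : (cuboidW p τ n l).IsSymm := by
  ext i j
  simp only [cuboidW, Matrix.transpose_apply, Matrix.of_apply, eq_comm]

open scoped Classical in
theorem step (τ : ℕ) (hτ : 1 ≤ τ) (p : ℕ → ℕ) (hp : ∀ r < τ, Nat.Prime (p r))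
    (n : ℕ) (hn : n = ∏ r ∈ Finset.range τ, p r) (l : ℕ) (S : Finset ℕ) (hS : l % τ ∉ S)
    (c : ℝ) :
    cuboidW p τ n l * (Matrix.of fun i j : Fin n =>
      if ∀ r < τ, r ∉ S → digit p r (i : ℕ) = digit p r (j : ℕ) then c else 0) =
    Matrix.of fun i j : Fin n =>
      if ∀ r < τ, r ∉ insert (l % τ) S → digit p r (i : ℕ) = digit p r (j : ℕ) then
        (p (l % τ) : ℝ)⁻¹ * c else 0 := by
  have hl : l % τ < τ := Nat.mod_lt _ hτ
  ext i j
  simp only [Matrix.mul_apply, cuboidW, Matrix.of_apply]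
  obtain ⟨k, hk⟩ := exists_digit τ p n hn
    (fun r => if r = l % τ then digit p r j else digit p r i) (by
      intro r hr
      split_ifs with h
      · exact Nat.mod_lt _ (hp r hr).pos
      · exact Nat.mod_lt _ (hp r hr).pos)
  rw [Finset.sum_eq_single k]
  · rw [if_pos]
    · rw [mul_ite, mul_zero]
      congr 1
      apply propext
      constructor
      · intro h r hr hrS
        rw [Finset.mem_insert, not_or] at hrS
        rw [← h r hr hrS.2, hk r hr, if_neg hrS.1]
      · intro h r hr hrS
        rw [hk r hr]
        split_ifs with h'
        · rfl
        · exact h r hr (by rw [Finset.mem_insert, not_or]; exact ⟨h', hrS⟩)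
    · intro r hr h
      rw [hk r hr, if_neg h]
  · intro b _ hb
    by_cases h1 : ∀ r < τ, r ≠ l % τ → digit p r (i : ℕ) = digit p r (b : ℕ)
    · rw [if_neg (c := ∀ r < τ, r ∉ S → digit p r (b : ℕ) = digit p r (j : ℕ)), mul_zero]
      intro h2
      apply hb
      apply digit_ext τ p n hn
      intro r hr
      rw [hk r hr]
      split_ifs with h'
      · exact h2 r hr (h' ▸ hS)
      · exact (h1 r hr h').symm
    · rw [if_neg h1, zero_mul]
  · intro h
    exact absurd (Finset.mem_univ _) h

open scoped Classical in
theorem partial_prod (τ : ℕ) (hτ : 1 ≤ τ) (p : ℕ → ℕ) (hp : ∀ r < τ, Nat.Prime (p r))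
    (n : ℕ) (hn : n = ∏ r ∈ Finset.range τ, p r) (l : ℕ → ℕ)
    (hinj : Set.InjOn (fun i => l i % τ) (Finset.range τ : Set ℕ)) (k : ℕ) (hk : k ≤ τ) :
    mprod (fun i => cuboidW p τ n (l i)) k = Matrix.of fun i j : Fin n =>
      if ∀ r < τ, r ∉ (Finset.range k).image (fun i => l i % τ) →
        digit p r (i : ℕ) = digit p r (j : ℕ) then
      ((∏ r ∈ (Finset.range k).image (fun i => l i % τ), p r : ℕ) : ℝ)⁻¹ else 0 := by
  induction k with
  | zero =>
    ext i j
    simp only [mprod, Finset.range_zero, Finset.image_empty, Finset.prod_empty,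
      Matrix.one_apply, Matrix.of_apply, Nat.cast_one, inv_one]
    congr 1
    apply propext
    constructor
    · rintro rfl r _ _
      rfl
    · intro h
      exact digit_ext τ p n hn i j fun r hr => h r hr (Finset.notMem_empty r)
  | succ k ih =>
    have hnot : l k % τ ∉ (Finset.range k).image (fun i => l i % τ) := by
      intro h
      obtain ⟨a, ha, hak⟩ := Finset.mem_image.1 h
      have ha' := Finset.mem_range.1 ha
      have := hinj (by simp; omega) (by simp; omega) hak
      omega
    rw [mprod, ih (by omega), step τ hτ p hp n hn _ _ hnot, Finset.range_add_one,
      Finset.image_insert, Finset.prod_insert hnot]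
    push_cast
    rw [mul_inv]

theorem stmt5 (τ : ℕ) (hτ : 1 ≤ τ) (p : ℕ → ℕ) (hp : ∀ r < τ, Nat.Prime (p r))
    (n : ℕ) (hn : n = ∏ r ∈ Finset.range τ, p r) :
    (∀ l : ℕ, (cuboidW p τ n l).IsSymm ∧ DoublyStochastic (cuboidW p τ n l)) ∧
    (∀ l : ℕ → ℕ,
      Finset.image (fun i => l i % τ) (Finset.range τ) = Finset.range τ →
      mprod (fun i => cuboidW p τ n (l i)) τ = Jmat n) := by
  constructor
  · intro l
    refine ⟨cuboid_symm p τ n l, ?_, row_sum τ hτ p hp n hn l, ?_⟩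
    · intro i j
      simp only [cuboidW, Matrix.of_apply]
      split_ifs <;> positivity
    · intro j
      rw [← row_sum τ hτ p hp n hn l j]
      exact Finset.sum_congr rfl fun i _ => (cuboid_symm p τ n l).apply j i
  · intro l hl
    have hinj : Set.InjOn (fun i => l i % τ) (Finset.range τ : Set ℕ) :=
      Finset.card_image_iff.1 (by rw [hl])
    rw [partial_prod τ hτ p hp n hn l hinj τ le_rfl, hl, ← hn]
    ext i j
    simp only [Jmat, Matrix.of_apply]
    rw [if_pos]
    intro r hr h
    exact absurd (Finset.mem_range.2 hr) h
end

section
/- Let τ ≥ 1 and n = 2^τ. For l ∈ ℕ, define the one-peer hyper-cube weight matrix W^(l) ∈ ℝ^{n×n} (indices 0, …, n−1) by W^(l)_{ij} = 1/2 if i XOR j = 2^{l mod τ} (bitwise XOR of the binary representations), W^(l)_{ij} = 1/2 if i = j, and 0 otherwise. Then each W^(l) is symmetric and doubly stochastic, and W^(τ−1) W^(τ−2) ⋯ W^(1) W^(0) = (1/n)·11ᵀ, i.e., the matrices W^(0), …, W^(τ−1) have the finite-time consensus property. -/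
open Matrix

/-- The one-peer hyper-cube weight matrix `W^(l)` on `n = 2^τ` nodes (indices `0, …, n-1`):
`W^(l)_{ij} = 1/2` if `i XOR j = 2^(l mod τ)`, `1/2` if `i = j`, and `0` otherwise. -/
noncomputable def cubeW (n τ l : ℕ) : Matrix (Fin n) (Fin n) ℝ :=
  Matrix.of fun i j =>
    if (i : ℕ) ^^^ (j : ℕ) = 2 ^ (l % τ) then 1 / 2
    else if i = j then 1 / 2
    else 0

theorem xor_eq_iff_aux (a b c : ℕ) : a ^^^ b = c ↔ b = a ^^^ c := by
  constructor
  · rintro rfl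
    rw [← Nat.xor_assoc, Nat.xor_self, Nat.zero_xor]
  · rintro rfl
    rw [← Nat.xor_assoc, Nat.xor_self, Nat.zero_xor]

theorem cubeW_sum (τ : ℕ) (hτ : 1 ≤ τ) (l : ℕ) (i : Fin (2 ^ τ))
    (f : ℕ → ℝ) :
    ∑ j : Fin (2 ^ τ), cubeW (2 ^ τ) τ l i j * f j
      = 1 / 2 * f ((i : ℕ) ^^^ 2 ^ (l % τ)) + 1 / 2 * f i := by
  have hk : l % τ < τ := Nat.mod_lt _ hτ
  have hp : (i : ℕ) ^^^ 2 ^ (l % τ) < 2 ^ τ :=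
    Nat.xor_lt_two_pow i.2 (Nat.pow_lt_pow_right (by norm_num) hk)
  have hpos : 2 ^ (l % τ) ≠ 0 := by positivity
  have key : ∀ j : Fin (2 ^ τ), cubeW (2 ^ τ) τ l i j * f j
      = (if j = ⟨(i : ℕ) ^^^ 2 ^ (l % τ), hp⟩ then 1 / 2 * f j else 0)
        + (if j = i then 1 / 2 * f j else 0) := by
    intro j
    simp only [cubeW, Matrix.of_apply]
    have h1 : (i : ℕ) ^^^ (j : ℕ) = 2 ^ (l % τ) ↔ j = ⟨(i : ℕ) ^^^ 2 ^ (l % τ), hp⟩ := by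
      rw [xor_eq_iff_aux, Fin.ext_iff]
    by_cases h : j = i
    · subst h
      have : ¬ ((j : ℕ) ^^^ (j : ℕ) = 2 ^ (l % τ)) := by
        rw [Nat.xor_self]; exact fun h => hpos h.symm
      have h2 := this
      rw [h1] at h2
      simp [this, h2]
    · have h' : ¬ i = j := fun e => h e.symm
      by_cases hx : (i : ℕ) ^^^ (j : ℕ) = 2 ^ (l % τ)
      · rw [if_pos hx, if_pos (h1.1 hx), if_neg h, add_zero]
      · rw [if_neg hx, if_neg (fun e => hx (h1.2 e)), if_neg h, if_neg h']; simp
  rw [Finset.sum_congr rfl (fun j _ => key j), Finset.sum_add_distrib]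
  simp

theorem cubeW_symm (n τ l : ℕ) : (cubeW n τ l).IsSymm := by
  ext i j
  simp only [cubeW, Matrix.transpose_apply, Matrix.of_apply]
  rw [Nat.xor_comm]
  simp only [eq_comm (a := i) (b := j)]

theorem xor_one_half (a b : ℕ) :
    (if a ^^^ 1 = b then (1 : ℝ) else 0) + (if a = b then 1 else 0)
      = if a / 2 = b / 2 then 1 else 0 := by
  have h1 : (a ^^^ 1) / 2 = a / 2 := by
    rw [Nat.xor_div_two]; simp
  have h2 : (a ^^^ 1) % 2 = (a + 1) % 2 := by
    rw [Nat.xor_mod_two_eq]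
  generalize a ^^^ 1 = c at *
  split_ifs <;> first | omega | norm_num

theorem mprod_cube (τ : ℕ) (hτ : 1 ≤ τ) (k : ℕ) (hk : k ≤ τ) (i j : Fin (2 ^ τ)) :
    mprod (cubeW (2 ^ τ) τ) k i j
      = if (i : ℕ) >>> k = (j : ℕ) >>> k then ((2 : ℝ) ^ k)⁻¹ else 0 := by
  induction k generalizing i with
  | zero => simp [mprod, Matrix.one_apply, Fin.ext_iff]
  | succ k ih =>
    have e : ∀ m : Fin (2 ^ τ), mprod (cubeW (2 ^ τ) τ) k m j
      = (fun x : ℕ => if x >>> k = (j : ℕ) >>> k then ((2 : ℝ) ^ k)⁻¹ else 0) m :=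
      fun m => ih (by omega) m
    rw [mprod, Matrix.mul_apply]
    simp only [e]
    rw [cubeW_sum τ hτ k i (fun x : ℕ => if x >>> k = (j : ℕ) >>> k then ((2 : ℝ) ^ k)⁻¹ else 0)]
    rw [Nat.mod_eq_of_lt (by omega)]
    have hx : ((i : ℕ) ^^^ 2 ^ k) >>> k = ((i : ℕ) >>> k) ^^^ 1 := by
      rw [Nat.shiftRight_xor_distrib]
      congr 1
      rw [Nat.shiftRight_eq_div_pow, Nat.div_self (by positivity)]
    have := xor_one_half ((i : ℕ) >>> k) ((j : ℕ) >>> k)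
    simp only [hx, Nat.shiftRight_succ]
    have g : ∀ (P : Prop) [Decidable P] (c : ℝ), (if P then c else 0) = c * (if P then 1 else 0) := by
      intros; simp
    rw [g _ ((2 : ℝ) ^ k)⁻¹, g (_ / 2 = _) , g (_ = _) ((2 : ℝ) ^ k)⁻¹, ← this, pow_succ, mul_inv]
    ring

theorem stmt6 (τ : ℕ) (hτ : 1 ≤ τ) (n : ℕ) (hn : n = 2 ^ τ) :
    (∀ l : ℕ, (cubeW n τ l).IsSymm ∧ DoublyStochastic (cubeW n τ l)) ∧
    mprod (cubeW n τ) τ = Jmat n := by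
  subst hn
  refine ⟨fun l => ⟨cubeW_symm _ _ _, ?_⟩, ?_⟩
  · have hrow : ∀ i, ∑ j, cubeW (2 ^ τ) τ l i j = 1 := by
      intro i
      have := cubeW_sum τ hτ l i (fun _ => 1)
      norm_num at this
      exact this
    refine ⟨?_, hrow, ?_⟩
    · intro i j
      simp only [cubeW, Matrix.of_apply]
      split_ifs <;> norm_num
    · intro j
      rw [← hrow j]
      exact Finset.sum_congr rfl fun i _ => (cubeW_symm _ _ _).apply j i
  · ext i j
    rw [mprod_cube τ hτ τ le_rfl, Nat.shiftRight_eq_div_pow, Nat.shiftRight_eq_div_pow,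
      Nat.div_eq_of_lt i.2, Nat.div_eq_of_lt j.2]
    simp [Jmat]
end

section
/- Let p ≥ 2, τ ≥ 1, n = p^τ, and let W_db ∈ ℝ^{n×n} be the de Bruijn weight matrix, defined by (W_db)_{ij} = 1/p if i mod p^{τ−1} = ⌊j/p⌋ and 0 otherwise (indices 0, …, n−1). Then W_db is doubly stochastic and W_db^τ = (1/n)·11ᵀ; that is, the constant sequence W^(0) = ⋯ = W^(τ−1) = W_db has the finite-time consensus property. -/
open Matrix

/-- The de Bruijn weight matrix on `n = p^τ` nodes (indices `0, …, n-1`):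
`(W_db)_{ij} = 1/p` if `i mod p^{τ-1} = ⌊j/p⌋`, and `0` otherwise. -/
noncomputable def deBruijnW (p τ : ℕ) : Matrix (Fin (p ^ τ)) (Fin (p ^ τ)) ℝ :=
  Matrix.of fun i j => if (i : ℕ) % p ^ (τ - 1) = (j : ℕ) / p then (p : ℝ)⁻¹ else 0

lemma sum_range_mul_aux (a b : ℕ) (f : ℕ → ℝ) :
    ∑ l ∈ Finset.range (a * b), f l
      = ∑ x ∈ Finset.range a, ∑ y ∈ Finset.range b, f (b * x + y) := by
  induction a with
  | zero => simp
  | succ a ih =>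
    rw [Nat.succ_mul, Finset.sum_range_add, ih, Finset.sum_range_succ]
    simp [mul_comm]

lemma sum_range_mul_aux' (N a b : ℕ) (hN : N = a * b) (f : ℕ → ℝ) :
    ∑ l ∈ Finset.range N, f l
      = ∑ x ∈ Finset.range a, ∑ y ∈ Finset.range b, f (b * x + y) := by
  rw [hN, sum_range_mul_aux]

lemma deBruijn_key (p m s i c l : ℕ) (hp : 0 < p) :
    ((i % p ^ (m + s) = l / p) ∧ l % p ^ (m + 1) = c) ↔
      (l = p * (i % p ^ (m + s)) + c % p ∧ i % p ^ m = c / p) := by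
  have hmod : ∀ l, l % p ^ (m + 1) = p * ((l / p) % p ^ m) + l % p := by
    intro l
    rw [pow_succ', Nat.mod_mul, add_comm]
  have hmm : i % p ^ (m + s) % p ^ m = i % p ^ m :=
    Nat.mod_mod_of_dvd _ (pow_dvd_pow _ (Nat.le_add_right _ _))
  constructor
  · rintro ⟨h1, h2⟩
    rw [hmod, ← h1, hmm] at h2
    have hl := Nat.div_add_mod l p
    have hlt := Nat.mod_lt l hp
    have h3 : c % p = l % p := by rw [← h2]; simp
    refine ⟨by rw [h1, h3, hl], ?_⟩
    rw [← h2, Nat.mul_add_div hp, Nat.div_eq_of_lt hlt, add_zero]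
  · rintro ⟨h1, h2⟩
    have hlt := Nat.mod_lt c hp
    have h3 : l / p = i % p ^ (m + s) := by
      rw [h1, Nat.mul_add_div hp, Nat.div_eq_of_lt hlt, add_zero]
    have h4 : l % p = c % p := by rw [h1]; simp
    refine ⟨h3.symm, ?_⟩
    rw [hmod, h3, hmm, h2, h4, Nat.div_add_mod]

lemma deBruijn_pow (p τ : ℕ) (hp : 0 < p) (k : ℕ) (hk : k ≤ τ) (i j : Fin (p ^ τ)) :
    (deBruijnW p τ ^ k) i j =
      if (i : ℕ) % p ^ (τ - k) = (j : ℕ) / p ^ k then ((p : ℝ)⁻¹) ^ k else 0 := by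
  induction k generalizing i j with
  | zero =>
    simp [Matrix.one_apply, Nat.mod_eq_of_lt i.2, Fin.ext_iff]
  | succ k ih =>
    obtain ⟨m, rfl⟩ : ∃ m, τ = m + k + 1 := ⟨τ - (k + 1), by omega⟩
    rw [pow_succ', Matrix.mul_apply]
    have e1 : m + k + 1 - k = m + 1 := by omega
    have e2 : m + k + 1 - (k + 1) = m := by omega
    have hlt : p * ((i : ℕ) % p ^ (m + k)) + ((j : ℕ) / p ^ k) % p < p ^ (m + k + 1) := by
      have h1 := Nat.mod_lt (i : ℕ) (pow_pos hp (m + k))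
      have h2 := Nat.mod_lt ((j : ℕ) / p ^ k) hp
      have h3 : p ^ (m + k + 1) = p * p ^ (m + k) := pow_succ' _ _
      nlinarith
    have : ∀ l, deBruijnW p (m + k + 1) i l * (deBruijnW p (m + k + 1) ^ k) l j =
        if l = ⟨_, hlt⟩ then
          (if (i : ℕ) % p ^ m = (j : ℕ) / p ^ (k + 1) then ((p : ℝ)⁻¹) ^ (k + 1) else 0)
        else 0 := by
      intro l
      have key := deBruijn_key p m k i (j / p ^ k) l hp
      rw [ih (by omega), e1, deBruijnW, Matrix.of_apply, Nat.add_sub_cancel, ite_zero_mul_ite_zero,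
        ← ite_and, pow_succ' (p : ℝ)⁻¹]
      rw [Nat.div_div_eq_div_mul, ← pow_succ] at key
      refine if_congr ?_ rfl rfl
      rw [Fin.ext_iff]
      exact key
    rw [Finset.sum_congr rfl fun l _ => this l, e2]
    simp

theorem stmt10 (p τ : ℕ) (hp : 2 ≤ p) (hτ : 1 ≤ τ) :
    DoublyStochastic (deBruijnW p τ) ∧ deBruijnW p τ ^ τ = Jmat (p ^ τ) := by
  have hp0 : 0 < p := by omega
  have hpr : (p : ℝ) ≠ 0 := by positivity
  refine ⟨⟨?_, ?_, ?_⟩, ?_⟩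
  · intro i j
    simp only [deBruijnW, Matrix.of_apply]
    split_ifs <;> positivity
  · intro i
    obtain ⟨t, rfl⟩ : ∃ t, τ = t + 1 := ⟨τ - 1, by omega⟩
    simp only [deBruijnW, Matrix.of_apply, Nat.add_sub_cancel]
    rw [Fin.sum_univ_eq_sum_range
      (fun j => if (i : ℕ) % p ^ t = j / p then (p : ℝ)⁻¹ else 0), sum_range_mul_aux' _ _ _ (pow_succ p t)]
    have h : ∀ x ∈ Finset.range (p ^ t), (∑ y ∈ Finset.range p,
        if (i : ℕ) % p ^ t = (p * x + y) / p then (p : ℝ)⁻¹ else 0)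
        = if (i : ℕ) % p ^ t = x then 1 else 0 := by
      intro x _
      rw [Finset.sum_congr rfl (g := fun _ => if (i : ℕ) % p ^ t = x then (p : ℝ)⁻¹ else 0)]
      · split_ifs <;> simp [hpr]
      · intro y hy
        rw [Nat.mul_add_div hp0, Nat.div_eq_of_lt (Finset.mem_range.1 hy), add_zero]
    rw [Finset.sum_congr rfl h, Finset.sum_ite_eq, if_pos]
    exact Finset.mem_range.2 (Nat.mod_lt _ (pow_pos hp0 _))
  · intro j
    obtain ⟨t, rfl⟩ : ∃ t, τ = t + 1 := ⟨τ - 1, by omega⟩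
    simp only [deBruijnW, Matrix.of_apply, Nat.add_sub_cancel]
    have hj : (j : ℕ) / p < p ^ t := by
      rw [Nat.div_lt_iff_lt_mul hp0, ← pow_succ]; exact j.2
    rw [Fin.sum_univ_eq_sum_range
      (fun i => if i % p ^ t = (j : ℕ) / p then (p : ℝ)⁻¹ else 0), sum_range_mul_aux' _ _ _ (pow_succ' p t)]
    have h : ∀ x ∈ Finset.range p, (∑ y ∈ Finset.range (p ^ t),
        if (p ^ t * x + y) % p ^ t = (j : ℕ) / p then (p : ℝ)⁻¹ else 0) = (p : ℝ)⁻¹ := by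
      intro x _
      rw [Finset.sum_congr rfl (g := fun y => if y = (j : ℕ) / p then (p : ℝ)⁻¹ else 0)]
      · rw [Finset.sum_ite_eq', if_pos (Finset.mem_range.2 hj)]
      · intro y hy
        rw [Nat.mul_add_mod, Nat.mod_eq_of_lt (Finset.mem_range.1 hy)]
    rw [Finset.sum_congr rfl h]
    simp [hpr]
  · ext i j
    rw [deBruijn_pow p τ hp0 τ le_rfl, if_pos]
    · simp [Jmat]
    · rw [Nat.sub_self, pow_zero, Nat.mod_one, Nat.div_eq_of_lt j.2]
end

section
/- Let α ∈ ℝ, let W^(0), W^(1), W^(2), … be real N×N matrices, and let u^(0), u^(1), … ∈ ℝ^N be arbitrary vectors with the convention u^(−1) = 0. Suppose the sequences x^(k), g^(k) ∈ ℝ^N satisfy g^(0) = u^(0) and, for all k ≥ 0, x^(k+1) = W^(k)(x^(k) − α g^(k)) and g^(k+1) = W^(k) g^(k) + u^(k+1) − u^(k). Then for all k ≥ 1: x^(k) = (W^(k−1) W^(k−2) ⋯ W^(0)) x^(0) − α ∑_{j=0}^{k−1} (k−j) (W^(k−1) W^(k−2) ⋯ W^(j)) (u^(j) − u^(j−1)).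 -/
open Matrix

/-- Ordered product from index `j` upwards: `mprodFrom W j c = W^(j+c) ⋯ W^(j+1) W^(j)`. -/
def mprodFrom {I : Type*} [Fintype I] (W : ℕ → Matrix I I ℝ) (j : ℕ) :
    ℕ → Matrix I I ℝ
  | 0 => W j
  | c + 1 => W (j + c + 1) * mprodFrom W j c

theorem mprodFrom_step {N : ℕ} (W : ℕ → Matrix (Fin N) (Fin N) ℝ) (j k : ℕ) (h : j ≤ k) :
    mprodFrom W j (k + 1 - j) = W (k + 1) * mprodFrom W j (k - j) := by
  obtain ⟨c, rfl⟩ := Nat.exists_eq_add_of_le h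
  rw [show j + c + 1 - j = c + 1 by omega, show j + c - j = c by omega]
  rfl

theorem gt_aux (N : ℕ) (α : ℝ) (W : ℕ → Matrix (Fin N) (Fin N) ℝ)
    (d x g : ℕ → Fin N → ℝ)
    (hg0 : g 0 = d 0)
    (hx : ∀ k, x (k + 1) = W k *ᵥ (x k - α • g k))
    (hg : ∀ k, g (k + 1) = W k *ᵥ g k + d (k + 1)) (k : ℕ) :
    W k *ᵥ g k = ∑ j ∈ Finset.range (k + 1), mprodFrom W j (k - j) *ᵥ d j ∧
    x (k + 1) = mprodFrom W 0 k *ᵥ x 0 -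
        α • ∑ j ∈ Finset.range (k + 1),
          ((k + 1 - j : ℕ) : ℝ) • (mprodFrom W j (k - j) *ᵥ d j) := by
  induction k with
  | zero => simp [hg0, hx, mprodFrom, Matrix.mulVec_sub, Matrix.mulVec_smul]
  | succ k ih =>
    obtain ⟨ih1, ih2⟩ := ih
    have key : W (k + 1) *ᵥ g (k + 1)
        = ∑ j ∈ Finset.range (k + 1 + 1), mprodFrom W j (k + 1 - j) *ᵥ d j := by
      rw [Finset.sum_range_succ, hg, ih1, Matrix.mulVec_add, Matrix.mulVec_sum]
      congr 1
      · apply Finset.sum_congr rfl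
        intro j hj
        rw [mprodFrom_step W j k (by simp at hj; omega), Matrix.mulVec_mulVec]
      · simp [mprodFrom]
    refine ⟨key, ?_⟩
    rw [hx (k + 1), Matrix.mulVec_sub, Matrix.mulVec_smul, key, ih2, Matrix.mulVec_sub,
      Matrix.mulVec_smul, Matrix.mulVec_mulVec, Matrix.mulVec_sum, sub_sub, ← smul_add]
    have h0 := mprodFrom_step W 0 k (Nat.zero_le _)
    simp only [Nat.sub_zero] at h0
    rw [h0]
    congr 2
    rw [Finset.sum_range_succ _ (k + 1), Finset.sum_range_succ _ (k + 1), ← add_assoc,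
      ← Finset.sum_add_distrib]
    congr 1
    · apply Finset.sum_congr rfl
      intro j hj
      have hj' : j ≤ k := by simp at hj; omega
      rw [mprodFrom_step W j k hj', Matrix.mulVec_smul, Matrix.mulVec_mulVec,
        show k + 1 + 1 - j = (k + 1 - j) + 1 by omega]
      push_cast
      rw [add_smul, one_smul]
    · simp

/-- Closed-form single-line recursion for the Gradient Tracking iterates. -/
theorem stmt13 (N : ℕ) (α : ℝ) (W : ℕ → Matrix (Fin N) (Fin N) ℝ)
    (u x g : ℕ → Fin N → ℝ)
    (hg0 : g 0 = u 0)
    (hx : ∀ k, x (k + 1) = W k *ᵥ (x k - α • g k))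
    (hg : ∀ k, g (k + 1) = W k *ᵥ g k + u (k + 1) - u k) :
    ∀ k, 1 ≤ k →
      x k = mprodFrom W 0 (k - 1) *ᵥ x 0 -
        α • ∑ j ∈ Finset.range k,
          ((k - j : ℕ) : ℝ) •
            (mprodFrom W j (k - 1 - j) *ᵥ (u j - if j = 0 then 0 else u (j - 1))) := by
  intro k hk
  obtain ⟨k, rfl⟩ := Nat.exists_eq_add_of_le' hk
  have := (gt_aux N α W (fun j => u j - if j = 0 then 0 else u (j - 1)) x g
    (by simp [hg0]) hx (by intro k; rw [hg]; simp [add_sub_assoc]) k).2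
  simpa only [Nat.add_sub_cancel] using this
end
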